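/- Let L be a real symmetric positive definite d×d matrix, define f(w) = ½⟨L w, w⟩, let B be a real symmetric d×d matrix, and set A := ½(L B + B L). Suppose there exists ξ > 0 with B L B ⪯ ξ·A, and let 0 < η ≤ 1/ξ. Then for every w ∈ ℝ^d: f(w − η·B w) ≤ f(w) − η·(1 − ηξ/2)·⟨A w, w⟩ ≤ f(w) − (η/2)·⟨A w, w⟩. -/

import Mathlib

open Matrix

/-!
The update `w ↦ w - η B w` is `w ↦ (1 - ηB) w`, so it turns the quadratic form of `L` into that of
the conjugate `(1 - ηB) L (1 - ηB) = L - η (LB + BL) + η² BLB`. By the definition of `A` the linear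
term is `-2η A`, and the quadratic one is at most `η² ξ A`; this is the descent estimate, already
in the Loewner order. Conjugation also gives `0 ≤ BLB ≤ ξ A`, hence `0 ≤ A`, and the coefficient
`η (1 - ηξ/2)` of `A` is at least `η / 2` because `ηξ ≤ 1`.
-/

section OrderedAlgebra

variable {k R : Type*}

theorem conjugate_one_sub_smul [CommRing k] [Ring R] [Algebra k R] (η : k) (b l : R) :
    (1 - η • b) * l * (1 - η • b) = l - η • (l * b + b * l) + η ^ 2 • (b * l * b) := by
  simp only [sub_mul, mul_sub, one_mul, mul_one, smul_mul_assoc, mul_smul_comm]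
  module

theorem half_smul_conjugate_one_sub_smul_le [Field k] [LinearOrder k] [IsStrictOrderedRing k]
    [Ring R] [PartialOrder R] [IsOrderedAddMonoid R] [Algebra k R] [PosSMulMono k R]
    {l b a : R} {ξ : k} (ha : a = (1 / 2 : k) • (l * b + b * l)) (hblb : b * l * b ≤ ξ • a)
    (η : k) :
    (1 / 2 : k) • ((1 - η • b) * l * (1 - η • b))
      ≤ (1 / 2 : k) • l - (η * (1 - η * ξ / 2)) • a :=
  calc (1 / 2 : k) • ((1 - η • b) * l * (1 - η • b))
    _ = (1 / 2 : k) • l - η • a + (η ^ 2 / 2) • (b * l * b) := by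
      rw [conjugate_one_sub_smul, ha]
      module
    _ ≤ (1 / 2 : k) • l - η • a + (η ^ 2 / 2) • (ξ • a) := by gcongr
    _ = (1 / 2 : k) • l - (η * (1 - η * ξ / 2)) • a := by module

theorem nonneg_of_conjugate_le_smul [Zero k] [Preorder k] [NonUnitalSemiring R]
    [PartialOrder R] [StarRing R] [StarOrderedRing R] [SMulZeroClass k R] [PosSMulReflectLE k R]
    {l b a : R} {ξ : k} (hl : 0 ≤ l) (hb : IsSelfAdjoint b) (hξ : 0 < ξ)
    (hblb : b * l * b ≤ ξ • a) : 0 ≤ a :=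
  nonneg_of_smul_nonneg_of_pos_left ((hb.conjugate_nonneg hl).trans hblb) hξ

theorem half_le_mul_one_sub_mul_div_two [Field k] [LinearOrder k] [IsStrictOrderedRing k]
    {ξ η : k} (hη₀ : 0 ≤ η) (hηξ : η * ξ ≤ 1) : η / 2 ≤ η * (1 - η * ξ / 2) :=
  calc η / 2
    _ = η * (1 - 1 / 2) := by ring
    _ ≤ η * (1 - η * ξ / 2) := by gcongr

end OrderedAlgebra

section QuadraticForm

theorem star_mulVec_dotProduct_mulVec_mulVec {m n R : Type*} [Fintype m] [Fintype n]
    [NonUnitalSemiring R] [StarRing R] (M : Matrix m n R) (L : Matrix m m R) (w : n → R) :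
    star (M *ᵥ w) ⬝ᵥ L *ᵥ (M *ᵥ w) = star w ⬝ᵥ (Mᴴ * L * M) *ᵥ w := by
  rw [star_mulVec, ← dotProduct_mulVec, mulVec_mulVec, mulVec_mulVec, Matrix.mul_assoc]

open scoped ComplexOrder MatrixOrder

variable {n 𝕜 : Type*} [Fintype n] [RCLike 𝕜]

theorem dotProduct_mulVec_le_of_le {M N : Matrix n n 𝕜} (h : M ≤ N) (w : n → 𝕜) :
    star w ⬝ᵥ M *ᵥ w ≤ star w ⬝ᵥ N *ᵥ w := by
  rw [← sub_nonneg, ← dotProduct_sub, ← sub_mulVec]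
  exact (le_iff.mp h).dotProduct_mulVec_nonneg w

theorem stmt_14_general {L B A : Matrix n n 𝕜} (hL : L.PosSemidef) (hB : B.IsHermitian)
    (hA : A = (1 / 2 : ℝ) • (L * B + B * L)) {ξ η : ℝ} (hξ : 0 < ξ)
    (hBLB : (ξ • A - B * L * B).PosSemidef) (hη₀ : 0 ≤ η) (hη : η ≤ 1 / ξ) (w : n → 𝕜) :
    (1 / 2 : ℝ) • (star (w - η • B *ᵥ w) ⬝ᵥ L *ᵥ (w - η • B *ᵥ w))
        ≤ (1 / 2 : ℝ) • (star w ⬝ᵥ L *ᵥ w) - (η * (1 - η * ξ / 2)) • (star w ⬝ᵥ A *ᵥ w)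
      ∧ (1 / 2 : ℝ) • (star w ⬝ᵥ L *ᵥ w) - (η * (1 - η * ξ / 2)) • (star w ⬝ᵥ A *ᵥ w)
        ≤ (1 / 2 : ℝ) • (star w ⬝ᵥ L *ᵥ w) - (η / 2) • (star w ⬝ᵥ A *ᵥ w) := by
  classical
  have hBLB_le : B * L * B ≤ ξ • A := le_iff.mpr hBLB
  have hA_nonneg : 0 ≤ A :=
    nonneg_of_conjugate_le_smul hL.nonneg hB.isSelfAdjoint hξ hBLB_le
  have hself_adjoint : (1 - η • B)ᴴ = 1 - η • B := by simp [hB.eq]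
  have hupdate : w - η • B *ᵥ w = (1 - η • B) *ᵥ w := by
    rw [sub_mulVec, one_mulVec, smul_mulVec]
  constructor
  · have hdescent := dotProduct_mulVec_le_of_le
      (half_smul_conjugate_one_sub_smul_le hA hBLB_le η) w
    rw [hupdate, star_mulVec_dotProduct_mulVec_mulVec, hself_adjoint]
    simpa only [sub_mulVec, smul_mulVec, dotProduct_sub, dotProduct_smul] using hdescent
  · exact sub_le_sub_left (smul_le_smul_of_nonneg_right
      (half_le_mul_one_sub_mul_div_two hη₀ ((le_div_iff₀ hξ).mp hη))
      (hA_nonneg.posSemidef.dotProduct_mulVec_nonneg w)) _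

end QuadraticForm

/-- per-round descent estimate. For `f(w) = ½⟨Lw,w⟩` with
`L ≻ 0`, `B` symmetric, `A = ½(LB + BL)`, `B L B ⪯ ξ A` with `ξ > 0`, and
`0 < η ≤ 1/ξ`, the sketched update `w ↦ w − η B w` satisfies
`f(w − ηBw) ≤ f(w) − η(1 − ηξ/2)⟨Aw,w⟩ ≤ f(w) − (η/2)⟨Aw,w⟩`. -/
theorem stmt_14 (d : ℕ) (L : Matrix (Fin d) (Fin d) ℝ) (hL : L.PosDef)
    (B : Matrix (Fin d) (Fin d) ℝ) (hB : B.IsSymm)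
    (A : Matrix (Fin d) (Fin d) ℝ) (hA : A = (1/2 : ℝ) • (L * B + B * L))
    (ξ : ℝ) (hξ : 0 < ξ) (hBLB : (ξ • A - B * L * B).PosSemidef)
    (η : ℝ) (hη0 : 0 < η) (hη : η ≤ 1 / ξ) :
    ∀ w : Fin d → ℝ,
      (1/2) * (L.mulVec (w - η • B.mulVec w) ⬝ᵥ (w - η • B.mulVec w))
          ≤ (1/2) * (L.mulVec w ⬝ᵥ w) - η * (1 - η * ξ / 2) * (A.mulVec w ⬝ᵥ w)
      ∧ (1/2) * (L.mulVec w ⬝ᵥ w) - η * (1 - η * ξ / 2) * (A.mulVec w ⬝ᵥ w)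
          ≤ (1/2) * (L.mulVec w ⬝ᵥ w) - (η / 2) * (A.mulVec w ⬝ᵥ w) := by
  intro w
  simpa only [star_trivial, smul_eq_mul, dotProduct_comm] using
    stmt_14_general hL.posSemidef (isHermitian_iff_isSymm.mpr hB) hA hξ hBLB hη0.le hη w
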